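/- Let p, q > 1, a ≤ 0 and b ≥ 0. Then the function x ↦ π_{p,q}/2 − arccos_{p,q}(x) is (a,b)-convex on (0,1): for all r, s ∈ (0,1), π_{p,q}/2 − arccos_{p,q}(M_a(r,s)) ≤ M_b(π_{p,q}/2 − arccos_{p,q}(r), π_{p,q}/2 − arccos_{p,q}(s)). -/

import Mathlib

open Real Set

/-- `arcsinPQ p q x = ∫₀ˣ (1 - tᵠ)^(-1/p) dt`, the generalized inverse sine. -/
noncomputable def arcsinPQ (p q x : ℝ) : ℝ := ∫ t in (0:ℝ)..x, (1 - t ^ q) ^ (-(1/p))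

/-- `arccosPQ p q x = arcsinPQ p q ((1 - x^p)^(1/q))`. -/
noncomputable def arccosPQ (p q x : ℝ) : ℝ := arcsinPQ p q ((1 - x ^ p) ^ (1/q))

/-- The power mean `M_a(x,y)`: `((x^a + y^a)/2)^(1/a)` for `a ≠ 0` and `√(xy)` for `a = 0`. -/
noncomputable def powerMean (a x y : ℝ) : ℝ :=
  if a = 0 then Real.sqrt (x * y) else ((x ^ a + y ^ a) / 2) ^ (1/a)

/-!
Write `f x = arcsinPQ p q 1 - arccosPQ p q x`. Then `f x = ∫₀ˣ g` with
`g t = (p / q) t^(p - 2) (1 - t^p)^(1 / q - 1)`. Powers of `t` are multiplicative, and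
`√(uv) + √((1 - u)(1 - v)) ≤ 1` on `[0, 1]`, so `g √(xy) ≤ √(g x * g y)`. This inequality passes
to the primitive `f` by rescaling all integrals to `(0, 1)` and applying Cauchy–Schwarz there.
Since `f` is nonnegative and increasing and `M_a ≤ M_0 ≤ M_b`, the inequality
`f (M_0 (r, s)) ≤ M_0 (f r, f s)` implies the one for `(a, b)`.
-/

open MeasureTheory

/-- `(a, b)`-convexity of `f` on `s`: `f (M_a(x, y)) ≤ M_b(f x, f y)` for all `x, y ∈ s`. It is
stated for an arbitrary set `s`; the usual notion takes `s` to be an interval in `(0, ∞)`. -/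
def PowerMeanConvexOn (a b : ℝ) (f : ℝ → ℝ) (s : Set ℝ) : Prop :=
  ∀ ⦃x⦄, x ∈ s → ∀ ⦃y⦄, y ∈ s → f (powerMean a x y) ≤ powerMean b (f x) (f y)

section PowerMean

variable {a b x y : ℝ}

lemma powerMean_zero (x y : ℝ) : powerMean 0 x y = √(x * y) := if_pos rfl

lemma powerMean_of_ne_zero (ha : a ≠ 0) (x y : ℝ) :
    powerMean a x y = ((x ^ a + y ^ a) / 2) ^ (1 / a) := if_neg ha

lemma sqrt_mul_le_half_add (hx : 0 ≤ x) (hy : 0 ≤ y) : √(x * y) ≤ (x + y) / 2 := by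
  have h := two_mul_le_add_of_sq_le_mul hx hy (sq_sqrt (mul_nonneg hx hy)).le
  linarith

lemma sqrt_mul_rpow (hx : 0 ≤ x) (hy : 0 ≤ y) (c : ℝ) : √(x * y) ^ c = √(x ^ c * y ^ c) := by
  have hxy : 0 ≤ x * y := mul_nonneg hx hy
  rw [← mul_rpow hx hy, ← rpow_div_two_eq_sqrt c hxy, sqrt_eq_rpow, ← rpow_mul hxy,
    mul_one_div]

lemma sqrt_mul_rpow_le (hx : 0 ≤ x) (hy : 0 ≤ y) (c : ℝ) :
    √(x * y) ^ c ≤ (x ^ c + y ^ c) / 2 :=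
  (sqrt_mul_rpow hx hy c).trans_le
    (sqrt_mul_le_half_add (rpow_nonneg hx c) (rpow_nonneg hy c))

lemma powerMean_le_powerMean_zero (hx : 0 < x) (hy : 0 < y) (ha : a ≤ 0) :
    powerMean a x y ≤ powerMean 0 x y := by
  rcases ha.eq_or_lt with rfl | ha
  · exact le_rfl
  have hpos : 0 < √(x * y) := sqrt_pos.2 (mul_pos hx hy)
  rw [powerMean_zero, powerMean_of_ne_zero ha.ne, one_div]
  exact (rpow_inv_le_iff_of_neg (by positivity) hpos ha).2 (sqrt_mul_rpow_le hx.le hy.le a)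

lemma powerMean_zero_le_powerMean (hx : 0 ≤ x) (hy : 0 ≤ y) (hb : 0 ≤ b) :
    powerMean 0 x y ≤ powerMean b x y := by
  rcases hb.eq_or_lt with rfl | hb
  · exact le_rfl
  rw [powerMean_zero, powerMean_of_ne_zero hb.ne', one_div]
  exact (le_rpow_inv_iff_of_pos (sqrt_nonneg _) (by positivity) hb).2 (sqrt_mul_rpow_le hx hy b)

lemma sqrt_mul_mem_uIcc (hx : 0 ≤ x) (hy : 0 ≤ y) : √(x * y) ∈ uIcc x y := by
  wlog hxy : x ≤ y generalizing x y
  · rw [mul_comm, uIcc_comm]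
    exact this hy hx (le_of_not_ge hxy)
  rw [uIcc_of_le hxy]
  exact ⟨le_sqrt_of_sq_le (by nlinarith), sqrt_le_iff.2 ⟨hy, by nlinarith⟩⟩

lemma half_add_mem_uIcc (x y : ℝ) : (x + y) / 2 ∈ uIcc x y := by
  grind [mem_uIcc]

lemma powerMean_mem_uIcc (hx : 0 < x) (hy : 0 < y) (a : ℝ) : powerMean a x y ∈ uIcc x y := by
  rcases eq_or_ne a 0 with rfl | ha
  · rw [powerMean_zero]
    exact sqrt_mul_mem_uIcc hx.le hy.le
  have hpos : uIcc (x ^ a) (y ^ a) ⊆ Ioi 0 :=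
    ordConnected_Ioi.uIcc_subset (rpow_pos_of_pos hx a) (rpow_pos_of_pos hy a)
  have hmaps : MapsTo (· ^ (1 / a)) (uIcc (x ^ a) (y ^ a)) (uIcc x y) := by
    have hinv {w : ℝ} (hw : 0 < w) : (w ^ a) ^ (1 / a) = w := by
      rw [one_div, rpow_rpow_inv hw.le ha]
    nth_rewrite 2 [← hinv hx, ← hinv hy]
    rcases ha.lt_or_gt with ha | ha
    · exact ((antitoneOn_rpow_Ioi_of_exponent_nonpos
        (one_div_nonpos.2 ha.le)).mono hpos).mapsTo_uIcc
    · exact ((monotoneOn_rpow_Ici_of_exponent_nonneg (one_div_nonneg.2 ha.le)).mono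
        (hpos.trans Ioi_subset_Ici_self)).mapsTo_uIcc
  rw [powerMean_of_ne_zero ha]
  exact hmaps (half_add_mem_uIcc _ _)

lemma powerMean_mem {s : Set ℝ} [s.OrdConnected] (hs : s ⊆ Ioi 0) (a : ℝ) (hx : x ∈ s)
    (hy : y ∈ s) : powerMean a x y ∈ s :=
  OrdConnected.uIcc_subset ‹_› hx hy (powerMean_mem_uIcc (hs hx) (hs hy) a)

lemma PowerMeanConvexOn.of_zero_zero {f : ℝ → ℝ} {s : Set ℝ} [s.OrdConnected] (hs : s ⊆ Ioi 0)
    (hf : PowerMeanConvexOn 0 0 f s) (hmono : MonotoneOn f s) (hnonneg : ∀ x ∈ s, 0 ≤ f x)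
    (ha : a ≤ 0) (hb : 0 ≤ b) : PowerMeanConvexOn a b f s := fun x hx y hy ↦
  calc
    f (powerMean a x y) ≤ f (powerMean 0 x y) :=
      hmono (powerMean_mem hs a hx hy) (powerMean_mem hs 0 hx hy)
        (powerMean_le_powerMean_zero (hs hx) (hs hy) ha)
    _ ≤ powerMean 0 (f x) (f y) := hf hx hy
    _ ≤ powerMean b (f x) (f y) :=
      powerMean_zero_le_powerMean (hnonneg x hx) (hnonneg y hy) hb

end PowerMean

section Integral

lemma memLp_two_sqrt {α : Type*} [MeasurableSpace α] {μ : Measure α} {u : α → ℝ}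
    (hu : Integrable u μ) (hu0 : 0 ≤ᵐ[μ] u) : MemLp (fun t ↦ √(u t)) 2 μ := by
  rw [memLp_two_iff_integrable_sq (continuous_sqrt.comp_aestronglyMeasurable hu.1)]
  exact hu.congr (hu0.mono fun t ht ↦ (sq_sqrt ht).symm)

lemma integral_sqrt_mul_sqrt_le {α : Type*} [MeasurableSpace α] {μ : Measure α} {u v : α → ℝ}
    (hu : Integrable u μ) (hv : Integrable v μ) (hu0 : 0 ≤ᵐ[μ] u) (hv0 : 0 ≤ᵐ[μ] v) :
    ∫ t, √(u t) * √(v t) ∂μ ≤ √((∫ t, u t ∂μ) * ∫ t, v t ∂μ) := by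
  have hsq {w : α → ℝ} (hw0 : 0 ≤ᵐ[μ] w) : ∫ t, √(w t) ^ (2 : ℝ) ∂μ = ∫ t, w t ∂μ :=
    integral_congr_ae (hw0.mono fun t ht ↦ by simp only [rpow_two, sq_sqrt ht])
  have h := integral_mul_le_Lp_mul_Lq_of_nonneg (μ := μ) HolderConjugate.two_two
    (.of_forall fun t ↦ sqrt_nonneg (u t)) (.of_forall fun t ↦ sqrt_nonneg (v t))
    (by simpa using memLp_two_sqrt hu hu0) (by simpa using memLp_two_sqrt hv hv0)
  rwa [hsq hu0, hsq hv0, ← sqrt_eq_rpow, ← sqrt_eq_rpow,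
    ← sqrt_mul (integral_nonneg_of_ae hu0)] at h

variable {g : ℝ → ℝ} {R : ℝ}

lemma monotoneOn_intervalIntegral_of_nonneg (hg0 : ∀ t ∈ Ioo 0 R, 0 ≤ g t)
    (hg : IntervalIntegrable g volume 0 R) :
    MonotoneOn (fun x ↦ ∫ t in 0..x, g t) (Icc 0 R) := by
  intro x hx y hy hxy
  refine intervalIntegral.integral_mono_interval le_rfl hx.1 hxy ?_
    (hg.mono_set (uIcc_subset_uIcc_left (mem_uIcc_of_le hy.1 hy.2)))
  rw [← Measure.restrict_congr_set Ioo_ae_eq_Ioc]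
  exact ae_restrict_of_forall_mem measurableSet_Ioo fun t ht ↦
    hg0 t (Ioo_subset_Ioo_right hy.2 ht)

lemma PowerMeanConvexOn.mul_comp_mul_le {x y t : ℝ} (hconv : PowerMeanConvexOn 0 0 g (Ioo 0 R))
    (hg0 : ∀ t ∈ Ioo 0 R, 0 ≤ g t) (hx : 0 ≤ x) (ht : 0 ≤ t) (hxt : x * t ∈ Ioo 0 R)
    (hyt : y * t ∈ Ioo 0 R) :
    powerMean 0 x y * g (powerMean 0 x y * t) ≤ √(x * g (x * t)) * √(y * g (y * t)) := by
  have hscale : powerMean 0 x y * t = powerMean 0 (x * t) (y * t) := by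
    rw [powerMean_zero, powerMean_zero, mul_mul_mul_comm, sqrt_mul' _ (mul_self_nonneg t),
      sqrt_mul_self ht]
  rw [hscale]
  calc
    powerMean 0 x y * g (powerMean 0 (x * t) (y * t))
      ≤ powerMean 0 x y * powerMean 0 (g (x * t)) (g (y * t)) :=
        mul_le_mul_of_nonneg_left (hconv hxt hyt) ((powerMean_zero x y).symm ▸ sqrt_nonneg _)
    _ = √(x * g (x * t)) * √(y * g (y * t)) := by
        rw [powerMean_zero, powerMean_zero, sqrt_mul hx, sqrt_mul hx,
          sqrt_mul (hg0 _ hxt), sqrt_mul' _ (hg0 _ hyt)]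
        ring

lemma PowerMeanConvexOn.intervalIntegral (hconv : PowerMeanConvexOn 0 0 g (Ioo 0 R))
    (hg0 : ∀ t ∈ Ioo 0 R, 0 ≤ g t) (hg : IntervalIntegrable g volume 0 R) :
    PowerMeanConvexOn 0 0 (fun x ↦ ∫ t in 0..x, g t) (Ioo 0 R) := by
  let μ : Measure ℝ := volume.restrict (Ioo 0 1)
  let φ (w t : ℝ) : ℝ := w * g (w * t)
  have hscale {w t : ℝ} (hw : w ∈ Ioo 0 R) (ht : t ∈ Ioo (0 : ℝ) 1) : w * t ∈ Ioo 0 R :=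
    ⟨mul_pos hw.1 ht.1, (mul_lt_of_lt_one_right hw.1 ht.2).trans hw.2⟩
  have hφ (w : ℝ) : ∫ t, φ w t ∂μ = ∫ t in 0..w, g t := by
    rw [← integral_Ioc_eq_integral_Ioo, ← intervalIntegral.integral_of_le zero_le_one,
      intervalIntegral.integral_const_mul, intervalIntegral.mul_integral_comp_mul_left,
      mul_zero, mul_one]
  have hφ_int {w : ℝ} (hw : w ∈ Ioo 0 R) : Integrable (φ w) μ := by
    have hgw : IntervalIntegrable g volume 0 w :=
      hg.mono_set (uIcc_subset_uIcc_left (mem_uIcc_of_le hw.1.le hw.2.le))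
    have h := (hgw.comp_mul_left (c := w)).const_mul w
    rw [zero_div, div_self hw.1.ne', intervalIntegrable_iff_integrableOn_Ioo_of_le zero_le_one] at h
    exact h
  have hφ0 {w : ℝ} (hw : w ∈ Ioo 0 R) : 0 ≤ᵐ[μ] φ w :=
    ae_restrict_of_forall_mem measurableSet_Ioo fun t ht ↦
      mul_nonneg hw.1.le (hg0 _ (hscale hw ht))
  intro x hx y hy
  have hm : powerMean 0 x y ∈ Ioo 0 R := powerMean_mem Ioo_subset_Ioi_self 0 hx hy
  have hle : φ (powerMean 0 x y) ≤ᵐ[μ] fun t ↦ √(φ x t) * √(φ y t) :=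
    ae_restrict_of_forall_mem measurableSet_Ioo fun t ht ↦
      hconv.mul_comp_mul_le hg0 hx.1.le ht.1.le (hscale hx ht) (hscale hy ht)
  have hsqrt_int : Integrable (fun t ↦ √(φ x t) * √(φ y t)) μ :=
    (memLp_two_sqrt (hφ_int hx) (hφ0 hx)).integrable_mul (memLp_two_sqrt (hφ_int hy) (hφ0 hy))
  calc
    ∫ t in 0..powerMean 0 x y, g t = ∫ t, φ (powerMean 0 x y) t ∂μ := (hφ _).symm
    _ ≤ ∫ t, √(φ x t) * √(φ y t) ∂μ := integral_mono_ae (hφ_int hm) hsqrt_int hle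
    _ ≤ √((∫ t, φ x t ∂μ) * ∫ t, φ y t ∂μ) :=
      integral_sqrt_mul_sqrt_le (hφ_int hx) (hφ_int hy) (hφ0 hx) (hφ0 hy)
    _ = powerMean 0 (∫ t in 0..x, g t) (∫ t in 0..y, g t) := by
      rw [hφ, hφ, powerMean_zero]

end Integral

lemma one_sub_rpow_mem_Ioo {c x : ℝ} (hc : 0 < c) (hx : x ∈ Ioo 0 1) : 1 - x ^ c ∈ Ioo 0 1 :=
  ⟨sub_pos.2 (rpow_lt_one hx.1.le hx.2 hc), sub_lt_self _ (rpow_pos_of_pos hx.1 c)⟩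

lemma sqrt_one_sub_mul_one_sub_le {u v : ℝ} (hu : u ∈ Icc 0 1) (hv : v ∈ Icc 0 1) :
    √((1 - u) * (1 - v)) ≤ 1 - √(u * v) := by
  have h := sqrt_mul_le_half_add hu.1 hv.1
  have h' := sqrt_mul_le_half_add (sub_nonneg.2 hu.2) (sub_nonneg.2 hv.2)
  linarith

section ArcsinPQ

variable {p q x : ℝ}

lemma hasDerivAt_arcsinPQ (hq : 0 < q) (hx : x ∈ Ioo 0 1) :
    HasDerivAt (arcsinPQ p q) ((1 - x ^ q) ^ (-(1 / p))) x := by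
  have hcont : ContinuousOn (fun t : ℝ ↦ (1 - t ^ q) ^ (-(1 / p))) (Ico 0 1) := by
    refine (continuousOn_const.sub (continuousOn_id.rpow_const fun t _ ↦ .inr hq.le)).rpow_const
      fun t ht ↦ .inl ?_
    exact (sub_pos.2 (rpow_lt_one ht.1 ht.2 hq)).ne'
  refine intervalIntegral.integral_hasDerivAt_right (ContinuousOn.intervalIntegrable_of_Icc
    hx.1.le (hcont.mono (Icc_subset_Ico_right hx.2))) ?_
    (hcont.continuousAt (Ico_mem_nhds hx.1 hx.2))
  exact (Measurable.stronglyMeasurable (by fun_prop)).stronglyMeasurableAtFilter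

lemma intervalIntegrable_one_sub_rpow_rpow (hp : 1 < p) (hq : 1 ≤ q) :
    IntervalIntegrable (fun t : ℝ ↦ (1 - t ^ q) ^ (-(1 / p))) volume 0 1 := by
  have hp_inv : -1 < -(1 / p) := neg_lt_neg ((div_lt_one (by linarith)).2 hp)
  have hdom : IntervalIntegrable (fun t : ℝ ↦ (1 - t) ^ (-(1 / p))) volume 0 1 := by
    simpa using ((intervalIntegral.intervalIntegrable_rpow' hp_inv).comp_sub_left
      (a := 0) (b := 1) 1).symm
  rw [intervalIntegrable_iff_integrableOn_Ioo_of_le zero_le_one] at hdom ⊢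
  refine hdom.mono' (Measurable.aestronglyMeasurable (by fun_prop))
    (ae_restrict_of_forall_mem measurableSet_Ioo fun t ht ↦ ?_)
  have ht' : 0 < 1 - t := sub_pos.2 ht.2
  have hle : 1 - t ≤ 1 - t ^ q :=
    sub_le_sub_left (rpow_le_self_of_le_one ht.1.le ht.2.le hq) 1
  rw [norm_of_nonneg (rpow_nonneg (ht'.le.trans hle) _)]
  exact rpow_le_rpow_of_nonpos ht' hle (neg_nonpos.2 (by positivity))

lemma continuousOn_arcsinPQ (hp : 1 < p) (hq : 1 ≤ q) :
    ContinuousOn (arcsinPQ p q) (Icc 0 1) := by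
  rw [← uIcc_of_le zero_le_one]
  exact intervalIntegral.continuousOn_primitive_interval'
    (intervalIntegrable_one_sub_rpow_rpow hp hq) left_mem_uIcc

/-- The derivative of `x ↦ arcsinPQ p q 1 - arccosPQ p q x` on `(0, 1)`, through which this
function is written as a primitive. Outside `(0, 1)` the values are junk. -/
noncomputable def arccosPQDensity (p q t : ℝ) : ℝ :=
  p / q * t ^ (p - 2) * (1 - t ^ p) ^ (1 / q - 1)

lemma arccosPQDensity_nonneg (hp : 0 < p) (hq : 0 < q) (hx : x ∈ Ioo 0 1) :
    0 ≤ arccosPQDensity p q x :=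
  mul_nonneg (mul_nonneg (div_nonneg hp.le hq.le) (rpow_nonneg hx.1.le _))
    (rpow_nonneg (one_sub_rpow_mem_Ioo hp hx).1.le _)

lemma powerMeanConvexOn_arccosPQDensity (hp : 0 < p) (hq : 1 ≤ q) :
    PowerMeanConvexOn 0 0 (arccosPQDensity p q) (Ioo 0 1) := by
  intro x hx y hy
  have hx0 := hx.1
  have hy0 := hy.1
  have hq0 : 0 < q := by linarith
  have hx' := one_sub_rpow_mem_Ioo hp hx
  have hy' := one_sub_rpow_mem_Ioo hp hy
  have hxy : 0 < (1 - x ^ p) * (1 - y ^ p) := mul_pos hx'.1 hy'.1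
  have hbase : √((1 - x ^ p) * (1 - y ^ p)) ≤ 1 - √(x * y) ^ p := by
    rw [sqrt_mul_rpow hx0.le hy0.le]
    exact sqrt_one_sub_mul_one_sub_le ⟨rpow_nonneg hx0.le p, (sub_pos.1 hx'.1).le⟩
      ⟨rpow_nonneg hy0.le p, (sub_pos.1 hy'.1).le⟩
  have hexp : 1 / q - 1 ≤ 0 := sub_nonpos.2 ((div_le_one hq0).2 hq)
  have hpow : (1 - √(x * y) ^ p) ^ (1 / q - 1) ≤
      √((1 - x ^ p) ^ (1 / q - 1) * (1 - y ^ p) ^ (1 / q - 1)) :=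
    (rpow_le_rpow_of_nonpos (sqrt_pos.2 hxy) hbase hexp).trans_eq
      (sqrt_mul_rpow hx'.1.le hy'.1.le _)
  rw [powerMean_zero, powerMean_zero]
  calc
    arccosPQDensity p q √(x * y)
      ≤ p / q * √(x * y) ^ (p - 2) *
          √((1 - x ^ p) ^ (1 / q - 1) * (1 - y ^ p) ^ (1 / q - 1)) :=
        mul_le_mul_of_nonneg_left hpow (by positivity)
    _ = √((p / q) ^ 2 * (x ^ (p - 2) * y ^ (p - 2)) *
          ((1 - x ^ p) ^ (1 / q - 1) * (1 - y ^ p) ^ (1 / q - 1))) := by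
        rw [sqrt_mul_rpow hx0.le hy0.le, sqrt_mul (by positivity : 0 ≤ (p / q) ^ 2 * _),
          sqrt_mul (sq_nonneg (p / q)), sqrt_sq (by positivity)]
    _ = √(arccosPQDensity p q x * arccosPQDensity p q y) := by
        simp only [arccosPQDensity]
        ring_nf

lemma arccosPQ_zero (hp : p ≠ 0) : arccosPQ p q 0 = arcsinPQ p q 1 := by
  rw [arccosPQ, zero_rpow hp, sub_zero, one_rpow]

lemma continuousOn_arccosPQ (hp : 1 < p) (hq : 1 ≤ q) :
    ContinuousOn (arccosPQ p q) (Icc 0 1) := by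
  have hp0 : 0 < p := by linarith
  have hq_inv : 0 ≤ 1 / q := by positivity
  refine (continuousOn_arcsinPQ hp hq).comp ?_ fun x hx ↦ ?_
  · exact (continuousOn_const.sub (continuousOn_id.rpow_const fun x _ ↦ .inr hp0.le)).rpow_const
      fun x _ ↦ .inr hq_inv
  · have h0 : 0 ≤ 1 - x ^ p := sub_nonneg.2 (rpow_le_one hx.1 hx.2 hp0.le)
    exact ⟨rpow_nonneg h0 _, rpow_le_one h0 (sub_le_self _ (rpow_nonneg hx.1 p)) hq_inv⟩

lemma hasDerivAt_arccosPQ (hp : 0 < p) (hq : 0 < q) (hx : x ∈ Ioo 0 1) :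
    HasDerivAt (arccosPQ p q) (-arccosPQDensity p q x) x := by
  have hx0 : x ≠ 0 := hx.1.ne'
  obtain ⟨hbase0, hbase1⟩ := one_sub_rpow_mem_Ioo hp hx
  have hu : (1 - x ^ p) ^ (1 / q) ∈ Ioo (0 : ℝ) 1 :=
    ⟨rpow_pos_of_pos hbase0 _, rpow_lt_one hbase0.le hbase1 (by positivity)⟩
  have houter : HasDerivAt (arcsinPQ p q) x⁻¹ ((1 - x ^ p) ^ (1 / q)) := by
    convert! hasDerivAt_arcsinPQ (p := p) hq hu using 1
    rw [one_div q, rpow_inv_rpow hbase0.le hq.ne', sub_sub_cancel, rpow_neg (by positivity [hx.1]),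
      one_div, rpow_rpow_inv hx.1.le hp.ne']
  have hinner : HasDerivAt (fun y : ℝ ↦ (1 - y ^ p) ^ (1 / q))
      (-(p * x ^ (p - 1)) * (1 / q) * (1 - x ^ p) ^ (1 / q - 1)) x :=
    ((hasDerivAt_rpow_const (.inl hx0)).const_sub 1).rpow_const (.inl hbase0.ne')
  refine (houter.comp x hinner).congr_deriv ?_
  have hpow : x ^ (p - 1) = x ^ (p - 2) * x := by
    rw [← rpow_add_one hx0]
    ring_nf
  rw [arccosPQDensity, hpow]
  field_simp

lemma intervalIntegrable_arccosPQDensity (hp : 1 < p) (hq : 1 ≤ q) :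
    IntervalIntegrable (arccosPQDensity p q) volume 0 1 := by
  rw [intervalIntegrable_iff_integrableOn_Ioc_of_le zero_le_one]
  have hp0 : 0 < p := by linarith
  have hq0 : 0 < q := by linarith
  exact intervalIntegral.integrableOn_deriv_of_nonneg (continuousOn_arccosPQ hp hq).neg
    (fun x hx ↦ (hasDerivAt_arccosPQ hp0 hq0 hx).neg.congr_deriv (neg_neg _))
    fun x hx ↦ arccosPQDensity_nonneg hp0 hq0 hx

lemma arcsinPQ_one_sub_arccosPQ_eq_integral (hp : 1 < p) (hq : 1 ≤ q) (hx : x ∈ Icc 0 1) :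
    arcsinPQ p q 1 - arccosPQ p q x = ∫ t in 0..x, arccosPQDensity p q t := by
  have hp0 : 0 < p := by linarith
  have h := intervalIntegral.integral_eq_sub_of_hasDerivAt_of_le hx.1
    ((continuousOn_arccosPQ hp hq).mono (Icc_subset_Icc_right hx.2))
    (fun t ht ↦ hasDerivAt_arccosPQ hp0 (by linarith) (Ioo_subset_Ioo_right hx.2 ht))
    ((intervalIntegrable_arccosPQDensity hp hq).mono_set
      (uIcc_subset_uIcc_left (mem_uIcc_of_le hx.1 hx.2))).neg
  rw [intervalIntegral.integral_neg, arccosPQ_zero hp0.ne'] at h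
  linarith

end ArcsinPQ

theorem pi_sub_arccosPQ_ab_convex' (p q a b : ℝ) (hp : 1 < p) (hq : 1 < q)
    (ha : a ≤ 0) (hb : 0 ≤ b)
    (r s : ℝ) (hr : r ∈ Set.Ioo (0:ℝ) 1) (hs : s ∈ Set.Ioo (0:ℝ) 1) :
    arcsinPQ p q 1 - arccosPQ p q (powerMean a r s) ≤
      powerMean b (arcsinPQ p q 1 - arccosPQ p q r) (arcsinPQ p q 1 - arccosPQ p q s) := by
  have hp0 : 0 < p := by linarith
  have hg0 : ∀ t ∈ Ioo 0 1, 0 ≤ arccosPQDensity p q t := fun t ht ↦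
    arccosPQDensity_nonneg hp0 (by linarith) ht
  have hg := intervalIntegrable_arccosPQDensity hp hq.le
  have hmono := monotoneOn_intervalIntegral_of_nonneg hg0 hg
  have hnonneg : ∀ x ∈ Ioo 0 1, 0 ≤ ∫ t in 0..x, arccosPQDensity p q t := fun x hx ↦ by
    simpa using hmono (left_mem_Icc.2 zero_le_one) (Ioo_subset_Icc_self hx) hx.1.le
  have hconv : PowerMeanConvexOn a b (fun x ↦ ∫ t in 0..x, arccosPQDensity p q t) (Ioo 0 1) :=
    ((powerMeanConvexOn_arccosPQDensity hp0 hq.le).intervalIntegral hg0 hg).of_zero_zero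
      Ioo_subset_Ioi_self (hmono.mono Ioo_subset_Icc_self) hnonneg ha hb
  have hf {x : ℝ} (hx : x ∈ Ioo 0 1) :=
    arcsinPQ_one_sub_arccosPQ_eq_integral hp hq.le (Ioo_subset_Icc_self hx)
  rw [hf (powerMean_mem Ioo_subset_Ioi_self a hr hs), hf hr, hf hs]
  exact hconv hr hs
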